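/- Let p, q ∈ ℕ with p − q ≡ 3 or 7 (mod 8), set d = p + q, and let α = −1 if p − q ≡ 3 (mod 8) and α = +1 if p − q ≡ 7 (mod 8). Let γ₀ : Cl_{p,q} → End_ℝ(S₀) be an elementary real pinor representation and J = γ₀(ω) the image of the Clifford volume element. Then there exists an invertible D ∈ End_ℝ(S₀) such that (1) D ∘ γ₀(ι(v)) = −γ₀(ι(v)) ∘ D for all v ∈ ℝ^d, and (2) D ∘ D = α·id. Moreover, every such D also satisfies D ∘ J = −J ∘ D, and any D' ∈ End_ℝ(S₀) satisfying (1) and (2) is of the form D' = (a·id + b·J) ∘ D for some a, b ∈ ℝ with a² + b² = 1. -/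

import Mathlib

set_option linter.all false
set_option linter.unusedSimpArgs false
namespace PinorD
universe u

theorem cplx {S : Type u} [AddCommGroup S] [Module ℝ S] (J : Module.End ℝ S) (hJ : J * J = -1) :
    (∃ K : Module.End ℝ S, K * K = 1 ∧ K * J = -(J * K)) ∧
    (FiniteDimensional ℝ S → Nontrivial S → ∀ X : Module.End ℝ S, X * J = J * X →
      ∃ (a b : ℝ) (v : S), v ≠ 0 ∧ X v = a • v + b • J v) := by
  let φ : ℂ →ₐ[ℝ] Module.End ℝ S := Complex.lift ⟨J, hJ⟩
  let _ : Module ℂ S := Module.compHom S φ.toRingHom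
  have hs : ∀ (z : ℂ) (s : S), z • s = z.re • s + z.im • J s := by
    intro z s
    have : z • s = φ z s := rfl
    rw [this]
    simp [φ, Complex.liftAux_apply]
  have : IsScalarTower ℝ ℂ S := by
    constructor
    intro r z s
    rw [hs, hs]
    simp [smul_add, mul_smul]
  have hI : ∀ s : S, Complex.I • s = J s := by intro s; simp [hs]
  constructor
  · let b := Module.Basis.ofVectorSpace ℂ S
    let k : S → S := fun s => b.repr.symm ((b.repr s).mapRange (starRingEnd ℂ) (map_zero _))
    have hk : ∀ (z : ℂ) (s : S), k (z • s) = (starRingEnd ℂ z) • k s := by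
      intro z s
      simp only [k]
      rw [← map_smul]
      congr 1
      ext i
      simp
    have hadd : ∀ s t, k (s + t) = k s + k t := by
      intro s t
      simp only [k]
      rw [← map_add]
      congr 1
      ext i
      simp
    let K : Module.End ℝ S :=
      { toFun := k
        map_add' := hadd
        map_smul' := by
          intro r s
          have := hk (r : ℂ) s
          simpa [hs] using this }
    refine ⟨K, ?_, ?_⟩
    · ext s
      show k (k s) = s
      simp only [k]
      rw [LinearEquiv.symm_apply_eq]
      ext i
      simp
    · ext s
      show k (J s) = - J (k s)
      rw [← hI, ← hI, hk]
      simp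
  · intro hf hn X hX
    have : FiniteDimensional ℂ S := Module.Finite.of_restrictScalars_finite ℝ ℂ S
    have hXJ : ∀ s, X (J s) = J (X s) := fun s => LinearMap.congr_fun hX s
    let X' : Module.End ℂ S :=
      { toFun := X
        map_add' := map_add X
        map_smul' := by
          intro z s
          simp [hs, hXJ] }
    obtain ⟨μ, hμ⟩ := Module.End.exists_eigenvalue X'
    obtain ⟨v, hv⟩ := hμ.exists_hasEigenvector
    exact ⟨μ.re, μ.im, v, hv.2, by rw [← hs]; exact hv.apply_eq_smul⟩

theorem neg_of {R : Type*} [Ring R] {x y : R} (h : x * y = -(y * x)) : y * x = -(x * y) := by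
  rw [h, neg_neg]

theorem zero_of {M : Type*} [AddCommGroup M] [Module ℝ M] {x : M} (h : x = -x) : x = 0 := by
  have h2 : (2 : ℝ) • x = 0 := by
    rw [two_smul]; nth_rewrite 2 [h]; simp
  simpa using h2

/-- Anticommuting. -/
def AC {R : Type*} [Ring R] (x y : R) : Prop := x * y = -(y * x)

/-- System of anticommuting operators. -/
def Sys {R : Type*} [Ring R] (A B : List R) : Prop :=
  (∀ a ∈ A, a * a = 1) ∧ (∀ b ∈ B, b * b = -1) ∧ (A ++ B).Pairwise AC

/-- Existence claim. -/
def P (p q : ℕ) (α : ℝ) : Prop :=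
  ∀ (S : Type u) [AddCommGroup S] [Module ℝ S] (A B : List (Module.End ℝ S)),
    Sys A B → A.length = p → B.length = q →
    ∃ D : Module.End ℝ S, D * D = α • (1 : Module.End ℝ S) ∧ ∀ x ∈ A ++ B, AC D x

theorem P01 : P.{u} 0 1 1 := by
  intro S _ _ A B h hA hB
  obtain rfl := List.length_eq_zero_iff.1 hA
  obtain ⟨b, rfl⟩ := List.length_eq_one_iff.1 hB
  obtain ⟨K, h1, h2⟩ := (cplx b (h.2.1 b (by simp))).1
  exact ⟨K, by simpa using h1, by simpa [AC] using h2⟩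

section corner
variable {S : Type u} [AddCommGroup S] [Module ℝ S]

/-- Lift of an operator on the +1 eigenspace. -/
noncomputable def up (c : Module.End ℝ S) (hc : c * c = 1)
    (D : Module.End ℝ (LinearMap.ker (c - 1))) : Module.End ℝ S :=
  (LinearMap.ker (c - 1)).subtype ∘ₗ D ∘ₗ
    LinearMap.codRestrict (LinearMap.ker (c - 1)) ((2⁻¹ : ℝ) • (1 + c)) (by
      intro s
      have h : c (c s) = s := LinearMap.congr_fun hc s
      simp [h]
      abel)

theorem mem_fix (c : Module.End ℝ S) (s : S) : s ∈ LinearMap.ker (c - 1) ↔ c s = s := by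
  simp [sub_eq_zero]

/-- Restriction of a commuting operator. -/
noncomputable def down (c : Module.End ℝ S) (x : Module.End ℝ S) (hx : x * c = c * x) :
    Module.End ℝ (LinearMap.ker (c - 1)) :=
  x.restrict (p := LinearMap.ker (c - 1)) (q := LinearMap.ker (c - 1)) (by
    intro s hs
    rw [mem_fix] at *
    have : x (c s) = c (x s) := LinearMap.congr_fun hx s
    rw [← this, hs])

variable (c : Module.End ℝ S) (hc : c * c = 1) (D : Module.End ℝ (LinearMap.ker (c - 1)))
theorem c_up : c * up c hc D = up c hc D := by
  ext s
  exact (mem_fix c _).1 (D _).2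

theorem up_c : up c hc D * c = up c hc D := by
  ext s
  have h : c (c s) = s := LinearMap.congr_fun hc s
  simp only [up, Module.End.mul_apply, LinearMap.comp_apply]
  congr 2
  ext
  simp [h, add_comm]

theorem up_up (α : ℝ) (hD : D * D = α • 1) :
    up c hc D * up c hc D = α • (2⁻¹ : ℝ) • (1 + c) := by
  ext s
  have hD' : ∀ t, D (D t) = α • t := fun t => LinearMap.congr_fun hD t
  simp only [up, Module.End.mul_apply, LinearMap.comp_apply]
  have : ∀ t : LinearMap.ker (c - 1), (LinearMap.codRestrict (LinearMap.ker (c - 1)) ((2⁻¹ : ℝ) • (1 + c)) (by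
      intro s
      have h : c (c s) = s := LinearMap.congr_fun hc s
      simp [h]
      abel)) ((LinearMap.ker (c - 1)).subtype t) = t := by
    intro t
    ext
    have := (mem_fix c _).1 t.2
    simp [this]
    module
  rw [this, hD']
  simp

theorem up_x (x : Module.End ℝ S) (hx : x * c = c * x) (h : AC D (down c x hx)) :
    AC (up c hc D) x := by
  ext s
  have h' : ∀ t, D (down c x hx t) = - (down c x hx (D t)) := fun t => LinearMap.congr_fun h t
  have hxs : x (c s) = c (x s) := LinearMap.congr_fun hx s
  simp only [up, Module.End.mul_apply, LinearMap.comp_apply, LinearMap.neg_apply]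
  have e : ∀ t, x ((LinearMap.ker (c - 1)).subtype t) = (LinearMap.ker (c - 1)).subtype (down c x hx t) := fun t => rfl
  rw [e, ← map_neg, ← h']
  congr 2
  ext
  simp [down, hxs]

theorem down_mul (x y : Module.End ℝ S) (hx : x * c = c * x) (hy : y * c = c * y) (t):
    ((down c x hx * down c y hy) t : S) = (x * y) t := rfl

end corner

theorem P30 : P.{u} 3 0 (-1) := by
  intro S _ _ A B h hA hB
  obtain rfl := List.length_eq_zero_iff.1 hB
  obtain ⟨a, b, d, rfl⟩ := List.length_eq_three.1 hA
  obtain ⟨h1, -, h3⟩ := h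
  simp [AC] at h1 h3
  obtain ⟨ha, hb, hd⟩ := h1
  obtain ⟨⟨hab, had⟩, hbd⟩ := h3
  have hba := neg_of hab
  have hda := neg_of had
  have hdb := neg_of hbd
  have ha' : ∀ x, a * (a * x) = x := fun x => by rw [← mul_assoc, ha, one_mul]
  have hb' : ∀ x, b * (b * x) = x := fun x => by rw [← mul_assoc, hb, one_mul]
  have hd' : ∀ x, d * (d * x) = x := fun x => by rw [← mul_assoc, hd, one_mul]
  have hba' : ∀ x, b * (a * x) = -(a * (b * x)) := fun x => by
    rw [← mul_assoc, hba, neg_mul, mul_assoc]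
  have hda' : ∀ x, d * (a * x) = -(a * (d * x)) := fun x => by
    rw [← mul_assoc, hda, neg_mul, mul_assoc]
  have hdb' : ∀ x, d * (b * x) = -(b * (d * x)) := fun x => by
    rw [← mul_assoc, hdb, neg_mul, mul_assoc]
  have hJa : (a * b * d) * a = a * (a * b * d) := by
    simp [mul_assoc, ha, hb, hd, ha', hb', hd', hba, hda, hdb, hba', hda', hdb']
  have hJJ : (a * b * d) * (a * b * d) = -1 := by
    simp [mul_assoc, ha, hb, hd, ha', hb', hd', hba, hda, hdb, hba', hda', hdb']
  obtain ⟨K, hK1, hK2⟩ := (cplx (down a (a * b * d) hJa) (by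
    ext t
    rw [down_mul, hJJ]; rfl)).1
  have e1 := c_up a ha K
  have e2 := up_c a ha K
  have e3 := up_up a ha K 1 (by simpa using hK1)
  have e4 : up a ha K * (a * b * d) = -((a * b * d) * up a ha K) := up_x a ha K _ hJa hK2
  generalize up a ha K = E at *
  have e5 : E * b * E = 0 := by
    have : E * b * E = -(E * b * E) := by
      calc E * b * E = E * b * (a * E) := by rw [e1]
        _ = -(E * a * b * E) := by simp [mul_assoc, hba']
        _ = _ := by rw [e2]
    exact zero_of this
  have f1 : (b * E - E * b) * a = -(a * (b * E - E * b)) := by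
    rw [sub_mul, mul_sub, mul_assoc b E a, e2, ← mul_assoc a E, e1, mul_assoc E b a, hba,
      mul_neg, ← mul_assoc E a, e2, ← mul_assoc a b, hab, neg_mul, mul_assoc b a, e1]
    abel
  have f2 : (b * E - E * b) * b = -(b * (b * E - E * b)) := by
    rw [sub_mul, mul_sub, hb', mul_assoc E, hb, mul_one, mul_assoc]; abel
  have hbJ : b * (a * b * d) = (a * b * d) * b := by
    simp [mul_assoc, ha, hb, hd, ha', hb', hd', hba, hda, hdb, hba', hda', hdb']
  have f3 : (b * E - E * b) * (a * b * d) = -((a * b * d) * (b * E - E * b)) := by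
    generalize a * b * d = J at *
    rw [sub_mul, mul_sub, mul_assoc, e4, mul_assoc E, hbJ, ← mul_assoc E, e4, mul_neg, ← mul_assoc,
      hbJ]
    noncomm_ring
  have hdJ : d = b * (a * (a * b * d)) := by
    simp [mul_assoc, ha, hb, hd, ha', hb', hd', hba, hda, hdb, hba', hda', hdb']
  refine ⟨b * E - E * b, ?_, ?_⟩
  · have : (b * E - E * b) * (b * E - E * b) =
      b * (E * b * E) - b * (E * E) * b - E * (b * b) * E + (E * b * E) * b := by noncomm_ring
    rw [this, e5, hb, mul_one, e3, one_smul]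
    simp only [mul_zero, zero_mul, add_zero, mul_smul_comm, smul_mul_assoc, mul_add, add_mul,
      mul_one, hb]
    rw [hba, neg_mul, mul_assoc, hb, mul_one]
    module
  · simp only [List.append_nil, List.mem_cons, List.not_mem_nil, or_false, forall_eq_or_imp,
      forall_eq]
    refine ⟨f1, f2, ?_⟩
    unfold AC
    generalize b * E - E * b = D at *
    generalize a * b * d = J at *
    rw [hdJ]
    rw [← mul_assoc, f2, neg_mul, mul_assoc, ← mul_assoc D, f1, neg_mul, mul_assoc, f3]
    noncomm_ring

theorem AC.pair {R : Type*} [Ring R] {x a b : R} (h1 : AC a x) (h2 : AC b x) :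
    x * (a * b) = a * b * x := by
  unfold AC at *
  rw [mul_assoc, h2, mul_neg, ← mul_assoc a, h1, neg_mul, neg_neg, mul_assoc]

theorem AC.symm {R : Type*} [Ring R] {x a : R} (h1 : AC a x) : AC x a := neg_of h1

theorem Phyp {p q : ℕ} {α : ℝ} (hP : P.{u} p q α) : P.{u} (p + 1) (q + 1) α := by
  intro S _ _ A B h hA hB
  obtain ⟨a, A, rfl⟩ := List.exists_cons_of_length_eq_add_one hA
  obtain ⟨b, B, rfl⟩ := List.exists_cons_of_length_eq_add_one hB
  obtain ⟨h1, h2, h3⟩ := h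
  simp only [List.pairwise_append, List.pairwise_cons, List.mem_cons, forall_eq_or_imp] at h1 h2 h3
  obtain ⟨ha, hA1⟩ := h1
  obtain ⟨hb, hB1⟩ := h2
  obtain ⟨⟨haA, hAA⟩, ⟨hbB, hBB⟩, ⟨hab, haB⟩, hAB⟩ := h3
  have hba : b * a = -(a * b) := neg_of hab
  have hc : (a * b) * (a * b) = 1 := by
    rw [mul_assoc, ← mul_assoc b, hba, neg_mul, mul_assoc, hb]; simp [ha]
  have hcA : ∀ x ∈ A, x * (a * b) = a * b * x := fun x hx => (haA x hx).pair (hAB x hx).1.symm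
  have hcB : ∀ x ∈ B, x * (a * b) = a * b * x := fun x hx => (haB x hx).pair (hbB x hx)
  have hd : ∀ x y (hx : x * (a * b) = a * b * x) (hy : y * (a * b) = a * b * y), AC x y →
      AC (down _ x hx) (down _ y hy) := by
    intro x y hx hy hxy
    ext t
    rw [down_mul, hxy]; rfl
  obtain ⟨D, hD1, hD2⟩ := hP (LinearMap.ker (a * b - 1))
    (A.pmap (fun x hx => down (a * b) x hx) hcA) (B.pmap (fun x hx => down (a * b) x hx) hcB)
    (by
      refine ⟨?_, ?_, ?_⟩
      · intro x hx
        obtain ⟨y, hy, rfl⟩ := List.mem_pmap.1 hx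
        ext t
        rw [down_mul, hA1 y hy]; rfl
      · intro x hx
        obtain ⟨y, hy, rfl⟩ := List.mem_pmap.1 hx
        ext t
        rw [down_mul, hB1 y hy]; rfl
      · rw [List.pairwise_append]
        refine ⟨?_, ?_, ?_⟩
        · exact List.Pairwise.pmap hAA _ (fun x hx y hy h => hd x y hx hy h)
        · exact List.Pairwise.pmap hBB _ (fun x hx y hy h => hd x y hx hy h)
        · intro x hx y hy
          obtain ⟨x', hx', rfl⟩ := List.mem_pmap.1 hx
          obtain ⟨y', hy', rfl⟩ := List.mem_pmap.1 hy
          exact hd _ _ _ _ ((hAB x' hx').2 y' hy'))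
    (by simpa using hA) (by simpa using hB)
  have e1 := c_up _ hc D
  have e2 := up_c _ hc D
  have e3 := up_up _ hc D α hD1
  have e4 : ∀ x, (x ∈ A ∨ x ∈ B) → AC (up _ hc D) x := by
    rintro x (hx | hx)
    · exact up_x _ hc D x (hcA x hx) (hD2 _ (List.mem_append_left _ (List.mem_pmap.2 ⟨x, hx, rfl⟩)))
    · exact up_x _ hc D x (hcB x hx) (hD2 _ (List.mem_append_right _ (List.mem_pmap.2 ⟨x, hx, rfl⟩)))
  generalize up _ hc D = E at *
  have hca : (a * b) * a = -(a * (a * b)) := by rw [mul_assoc, hba, mul_neg]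
  have hb_c : b = a * (a * b) := by rw [← mul_assoc, ha, one_mul]
  have hax : ∀ x, (x ∈ A ∨ x ∈ B) → AC a x := by
    rintro x (hx | hx)
    · exact haA x hx
    · exact haB x hx
  have ha' : ∀ x, a * (a * x) = x := fun x => by rw [← mul_assoc, ha, one_mul]
  generalize a * b = c at *
  have e5 : E * a * E = 0 := by
    have : E * a * E = -(E * a * E) := by
      calc E * a * E = E * c * a * E := by rw [e2]
        _ = -(E * a * (c * E)) := by rw [mul_assoc E c, hca]; noncomm_ring
        _ = _ := by rw [e1]
    exact zero_of this
  have f1 : (E - a * E * a) * a = -(a * (E - a * E * a)) := by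
    rw [sub_mul, mul_sub, mul_assoc (a * E), ha, mul_one, mul_assoc a E, ha']; abel
  have f2 : (E - a * E * a) * c = c * (E - a * E * a) := by
    have hac : a * c = -(c * a) := neg_of hca
    rw [sub_mul, mul_sub, e1, e2, mul_assoc (a * E), hac, mul_neg, ← mul_assoc, mul_assoc a E c, e2,
      ← mul_assoc c, ← mul_assoc c, hca, neg_mul, mul_assoc a c, e1, neg_mul]
  refine ⟨E - a * E * a, ?_, ?_⟩
  · have : (E - a * E * a) * (E - a * E * a) =
      E * E - (E * a * E) * a - a * (E * a * E) + a * E * (a * a) * E * a := by noncomm_ring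
    rw [this, e5, ha, mul_one, mul_assoc a E E, e3]
    simp only [mul_zero, zero_mul, sub_zero, mul_smul_comm, smul_mul_assoc, mul_add, add_mul,
      mul_one, ha]
    rw [mul_assoc, hca, mul_neg, ha']
    module
  · intro x hx
    have hx' : x = a ∨ x = b ∨ (x ∈ A ∨ x ∈ B) := by
      simp only [List.mem_append, List.mem_cons] at hx; tauto
    rcases hx' with rfl | rfl | hx'
    · exact f1
    · unfold AC
      generalize E - a * E * a = D at *
      rw [hb_c, ← mul_assoc, f1, neg_mul, mul_assoc, f2, mul_assoc]
    · have g1 : E * x = -(x * E) := e4 x hx'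
      have g2 : a * x = -(x * a) := hax x hx'
      unfold AC
      rw [sub_mul, mul_sub, g1, mul_assoc, g2, mul_neg, ← mul_assoc, mul_assoc a E x, g1, mul_neg,
        ← mul_assoc a x, g2]
      noncomm_ring


theorem AC.five {R : Type*} [Ring R] {y a b c d e : R} (h1 : AC y a) (h2 : AC y b) (h3 : AC y c)
    (h4 : AC y d) (h5 : AC y e) : AC y (a * b * c * d * e) := by
  unfold AC at *
  have h1' : ∀ x, y * (a * x) = -(a * (y * x)) := fun x => by
    rw [← mul_assoc, h1, neg_mul, mul_assoc]
  have h2' : ∀ x, y * (b * x) = -(b * (y * x)) := fun x => by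
    rw [← mul_assoc, h2, neg_mul, mul_assoc]
  have h3' : ∀ x, y * (c * x) = -(c * (y * x)) := fun x => by
    rw [← mul_assoc, h3, neg_mul, mul_assoc]
  have h4' : ∀ x, y * (d * x) = -(d * (y * x)) := fun x => by
    rw [← mul_assoc, h4, neg_mul, mul_assoc]
  simp only [mul_assoc, h1', h2', h3', h4', h5, mul_neg, neg_neg]

theorem quad {R : Type*} [Ring R] {a b c d ε : R} (hε : ε = 1 ∨ ε = -1)
    (ha : a * a = ε) (hb : b * b = ε) (hc : c * c = ε) (hd : d * d = ε)
    (hab : AC a b) (hac : AC a c) (had : AC a d) (hbc : AC b c) (hbd : AC b d) (hcd : AC c d) :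
    ∃ a' b' c' d' : R, a' * a' = -ε ∧ b' * b' = -ε ∧ c' * c' = -ε ∧ d' * d' = -ε ∧
      AC a' b' ∧ AC a' c' ∧ AC a' d' ∧ AC b' c' ∧ AC b' d' ∧ AC c' d' ∧
      ∀ y, (AC y a ∧ AC y b ∧ AC y c ∧ AC y d) ↔ (AC y a' ∧ AC y b' ∧ AC y c' ∧ AC y d') := by
  have hba : b * a = -(a * b) := hab.symm
  have hca : c * a = -(a * c) := hac.symm
  have hda : d * a = -(a * d) := had.symm
  have hcb : c * b = -(b * c) := hbc.symm
  have hdb : d * b = -(b * d) := hbd.symm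
  have hdc : d * c = -(c * d) := hcd.symm
  have sw : ∀ {u v : R}, u * v = -(v * u) → ∀ x, u * (v * x) = -(v * (u * x)) := fun {u v} h x => by
    rw [← mul_assoc, h, neg_mul, mul_assoc]
  have sq : ∀ {u : R}, u * u = ε → ∀ x, u * (u * x) = ε * x := fun {u} h x => by
    rw [← mul_assoc, h]
  have hba' := sw hba
  have hca' := sw hca
  have hda' := sw hda
  have hcb' := sw hcb
  have hdb' := sw hdb
  have hdc' := sw hdc
  have ha' := sq ha
  have hb' := sq hb
  have hc' := sq hc
  have hd' := sq hd
  clear sw sq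
  have ka : a = (a * b * c * d * a) * (a * b * c * d * b) * (a * b * c * d * c) * (a * b * c * d * d) * (a * b * c * d * a) := by
    rcases hε with rfl | rfl <;>
    simp [mul_assoc, ha, hb, hc, hd, ha', hb', hc', hd', hba, hca, hda, hcb, hdb, hdc, hba', hca', hda', hcb', hdb', hdc']
  have kb : b = (a * b * c * d * a) * (a * b * c * d * b) * (a * b * c * d * c) * (a * b * c * d * d) * (a * b * c * d * b) := by
    rcases hε with rfl | rfl <;>
    simp [mul_assoc, ha, hb, hc, hd, ha', hb', hc', hd', hba, hca, hda, hcb, hdb, hdc, hba', hca', hda', hcb', hdb', hdc']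
  have kc : c = (a * b * c * d * a) * (a * b * c * d * b) * (a * b * c * d * c) * (a * b * c * d * d) * (a * b * c * d * c) := by
    rcases hε with rfl | rfl <;>
    simp [mul_assoc, ha, hb, hc, hd, ha', hb', hc', hd', hba, hca, hda, hcb, hdb, hdc, hba', hca', hda', hcb', hdb', hdc']
  have kd : d = (a * b * c * d * a) * (a * b * c * d * b) * (a * b * c * d * c) * (a * b * c * d * d) * (a * b * c * d * d) := by
    rcases hε with rfl | rfl <;>
    simp [mul_assoc, ha, hb, hc, hd, ha', hb', hc', hd', hba, hca, hda, hcb, hdb, hdc, hba', hca', hda', hcb', hdb', hdc']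
  refine ⟨a * b * c * d * a, a * b * c * d * b, a * b * c * d * c, a * b * c * d * d,
    ?_, ?_, ?_, ?_, ?_, ?_, ?_, ?_, ?_, ?_, ?_⟩
  iterate 10
    · try unfold AC
      rcases hε with rfl | rfl <;>
      simp [mul_assoc, ha, hb, hc, hd, ha', hb', hc', hd', hba, hca, hda, hcb, hdb, hdc, hba', hca', hda', hcb', hdb', hdc']
  intro y
  constructor
  · rintro ⟨h1, h2, h3, h4⟩
    exact ⟨h1.five h2 h3 h4 h1, h1.five h2 h3 h4 h2, h1.five h2 h3 h4 h3, h1.five h2 h3 h4 h4⟩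
  · rintro ⟨h1, h2, h3, h4⟩
    refine ⟨?_, ?_, ?_, ?_⟩
    · rw [ka]; exact h1.five h2 h3 h4 h1
    · rw [kb]; exact h1.five h2 h3 h4 h2
    · rw [kc]; exact h1.five h2 h3 h4 h3
    · rw [kd]; exact h1.five h2 h3 h4 h4

theorem Pswap1 {p q : ℕ} {α : ℝ} (hP : P.{u} p (q + 4) α) : P.{u} (p + 4) q α := by
  intro S _ _ A B h hA hB
  obtain ⟨a, A, rfl⟩ := List.exists_cons_of_length_eq_add_one hA
  obtain ⟨b, A, rfl⟩ := List.exists_cons_of_length_eq_add_one (Nat.succ.inj hA)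
  obtain ⟨c, A, rfl⟩ := List.exists_cons_of_length_eq_add_one (Nat.succ.inj (Nat.succ.inj hA))
  obtain ⟨d, A, rfl⟩ := List.exists_cons_of_length_eq_add_one
    (Nat.succ.inj (Nat.succ.inj (Nat.succ.inj hA)))
  obtain ⟨h1, h2, h3⟩ := h
  simp only [List.pairwise_append, List.pairwise_cons, List.mem_cons, forall_eq_or_imp] at h1 h3
  obtain ⟨ha, hb, hc, hd, hA1⟩ := h1
  obtain ⟨⟨⟨hab, hac, had, haA⟩, ⟨hbc, hbd, hbA⟩, ⟨hcd, hcA⟩, hdA, hAA⟩, hBB, haB, hbB, hcB, hdB, hAB⟩ := h3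
  obtain ⟨a', b', c', d', ha', hb', hc', hd', hab', hac', had', hbc', hbd', hcd', H⟩ :=
    quad (Or.inl rfl) ha hb hc hd hab hac had hbc hbd hcd
  have HA : ∀ y ∈ A, AC y a' ∧ AC y b' ∧ AC y c' ∧ AC y d' := fun y hy =>
    (H y).1 ⟨(haA y hy).symm, (hbA y hy).symm, (hcA y hy).symm, (hdA y hy).symm⟩
  have HB : ∀ y ∈ B, AC y a' ∧ AC y b' ∧ AC y c' ∧ AC y d' := fun y hy =>
    (H y).1 ⟨(haB y hy).symm, (hbB y hy).symm, (hcB y hy).symm, (hdB y hy).symm⟩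
  obtain ⟨D, hD1, hD2⟩ := hP S A (a' :: b' :: c' :: d' :: B) ⟨hA1, by
      simp only [List.mem_cons, forall_eq_or_imp]
      exact ⟨ha', hb', hc', hd', h2⟩, by
      simp only [List.pairwise_append, List.pairwise_cons, List.mem_cons, forall_eq_or_imp]
      exact ⟨hAA, ⟨⟨hab', hac', had', fun y hy => (HB y hy).1.symm⟩,
        ⟨hbc', hbd', fun y hy => (HB y hy).2.1.symm⟩, ⟨hcd', fun y hy => (HB y hy).2.2.1.symm⟩,
        fun y hy => (HB y hy).2.2.2.symm, hBB⟩,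
        fun y hy => ⟨(HA y hy).1, (HA y hy).2.1, (HA y hy).2.2.1, (HA y hy).2.2.2, hAB y hy⟩⟩⟩
    (by simpa using hA) (by simpa using hB)
  refine ⟨D, hD1, ?_⟩
  have h := (H D).2 ⟨hD2 _ (by simp), hD2 _ (by simp), hD2 _ (by simp), hD2 _ (by simp)⟩
  intro x hx
  have hx' : x = a ∨ x = b ∨ x = c ∨ x = d ∨ x ∈ A ∨ x ∈ B := by
    simp only [List.mem_append, List.mem_cons] at hx; tauto
  rcases hx' with rfl | rfl | rfl | rfl | hx | hx
  · exact h.1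
  · exact h.2.1
  · exact h.2.2.1
  · exact h.2.2.2
  · exact hD2 _ (by simp [hx])
  · exact hD2 _ (by simp [hx])

theorem Pswap2 {p q : ℕ} {α : ℝ} (hP : P.{u} (p + 4) q α) : P.{u} p (q + 4) α := by
  intro S _ _ A B h hA hB
  obtain ⟨a, B, rfl⟩ := List.exists_cons_of_length_eq_add_one hB
  obtain ⟨b, B, rfl⟩ := List.exists_cons_of_length_eq_add_one (Nat.succ.inj hB)
  obtain ⟨c, B, rfl⟩ := List.exists_cons_of_length_eq_add_one (Nat.succ.inj (Nat.succ.inj hB))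
  obtain ⟨d, B, rfl⟩ := List.exists_cons_of_length_eq_add_one
    (Nat.succ.inj (Nat.succ.inj (Nat.succ.inj hB)))
  obtain ⟨h1, h2, h3⟩ := h
  simp only [List.pairwise_append, List.pairwise_cons, List.mem_cons, forall_eq_or_imp] at h2 h3
  obtain ⟨ha, hb, hc, hd, hB1⟩ := h2
  obtain ⟨hAA, ⟨⟨hab, hac, had, haB⟩, ⟨hbc, hbd, hbB⟩, ⟨hcd, hcB⟩, hdB, hBB⟩, hAB⟩ := h3
  obtain ⟨a', b', c', d', ha', hb', hc', hd', hab', hac', had', hbc', hbd', hcd', H⟩ :=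
    quad (Or.inr rfl) ha hb hc hd hab hac had hbc hbd hcd
  rw [neg_neg] at ha' hb' hc' hd'
  have HA : ∀ y ∈ A, AC y a' ∧ AC y b' ∧ AC y c' ∧ AC y d' := fun y hy =>
    (H y).1 ⟨(hAB y hy).1, (hAB y hy).2.1, (hAB y hy).2.2.1, (hAB y hy).2.2.2.1⟩
  have HB : ∀ y ∈ B, AC y a' ∧ AC y b' ∧ AC y c' ∧ AC y d' := fun y hy =>
    (H y).1 ⟨(haB y hy).symm, (hbB y hy).symm, (hcB y hy).symm, (hdB y hy).symm⟩
  obtain ⟨D, hD1, hD2⟩ := hP S (a' :: b' :: c' :: d' :: A) B ⟨by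
      simp only [List.mem_cons, forall_eq_or_imp]
      exact ⟨ha', hb', hc', hd', h1⟩, hB1, by
      simp only [List.pairwise_append, List.pairwise_cons, List.mem_cons, forall_eq_or_imp]
      exact ⟨⟨⟨hab', hac', had', fun y hy => (HA y hy).1.symm⟩,
        ⟨hbc', hbd', fun y hy => (HA y hy).2.1.symm⟩, ⟨hcd', fun y hy => (HA y hy).2.2.1.symm⟩,
        fun y hy => (HA y hy).2.2.2.symm, hAA⟩, hBB,
        fun y hy => (HB y hy).1.symm, fun y hy => (HB y hy).2.1.symm,
        fun y hy => (HB y hy).2.2.1.symm, fun y hy => (HB y hy).2.2.2.symm,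
        fun y hy => (hAB y hy).2.2.2.2⟩⟩
    (by simpa using hA) (by simpa using hB)
  refine ⟨D, hD1, ?_⟩
  have h := (H D).2 ⟨hD2 _ (by simp), hD2 _ (by simp), hD2 _ (by simp), hD2 _ (by simp)⟩
  intro x hx
  have hx' : x = a ∨ x = b ∨ x = c ∨ x = d ∨ x ∈ A ∨ x ∈ B := by
    simp only [List.mem_append, List.mem_cons] at hx; tauto
  rcases hx' with rfl | rfl | rfl | rfl | hx | hx
  · exact h.1
  · exact h.2.1
  · exact h.2.2.1
  · exact h.2.2.2
  · exact hD2 _ (by simp [hx])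
  · exact hD2 _ (by simp [hx])

theorem Phyps {p q : ℕ} {α : ℝ} (hP : P.{u} p q α) (n : ℕ) : P.{u} (p + n) (q + n) α := by
  induction n with
  | zero => exact hP
  | succ n ih => exact Phyp ih

theorem Pp {p : ℕ} {α : ℝ} (hP : P.{u} p 0 α) (n : ℕ) : P.{u} (p + 8 * n) 0 α := by
  induction n with
  | zero => exact hP
  | succ n ih => exact Pswap1 (p := p + 8 * n + 4) (Phyps ih 4)

theorem Pq {q : ℕ} {α : ℝ} (hP : P.{u} 0 q α) (n : ℕ) : P.{u} 0 (q + 8 * n) α := by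
  induction n with
  | zero => exact hP
  | succ n ih => exact Pswap2 (q := q + 8 * n + 4) (Phyps ih 4)

theorem P70 : P.{u} 7 0 1 := Pswap1 (p := 3) (q := 0) (Phyps P01 3)
theorem P05 : P.{u} 0 5 (-1) := Pswap2 (p := 0) (q := 1) (Phyps P30 1)

theorem Pall (p q : ℕ) (α : ℝ)
    (hα : (((p : ℤ) - (q : ℤ)) ≡ 3 [ZMOD 8] ∧ α = -1) ∨
      (((p : ℤ) - (q : ℤ)) ≡ 7 [ZMOD 8] ∧ α = 1)) : P.{u} p q α := by
  unfold Int.ModEq at hα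
  rcases le_total q p with h | h
  · rcases hα with ⟨h1, rfl⟩ | ⟨h1, rfl⟩
    · obtain ⟨n, hn⟩ : ∃ n, p = 3 + 8 * n + q := ⟨(p - q - 3) / 8, by omega⟩
      have := Phyps (Pp P30.{u} n) q
      rwa [← hn, zero_add] at this
    · obtain ⟨n, hn⟩ : ∃ n, p = 7 + 8 * n + q := ⟨(p - q - 7) / 8, by omega⟩
      have := Phyps (Pp P70.{u} n) q
      rwa [← hn, zero_add] at this
  · rcases hα with ⟨h1, rfl⟩ | ⟨h1, rfl⟩
    · obtain ⟨n, hn⟩ : ∃ n, q = 5 + 8 * n + p := ⟨(q - p - 5) / 8, by omega⟩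
      have := Phyps (Pq P05.{u} n) p
      rwa [← hn, zero_add] at this
    · obtain ⟨n, hn⟩ : ∃ n, q = 1 + 8 * n + p := ⟨(q - p - 1) / 8, by omega⟩
      have := Phyps (Pq P01.{u} n) p
      rwa [← hn, zero_add] at this

section lists
variable {R : Type*} [Ring R]

theorem mul_prod (D : R) (l : List R) (h : ∀ x ∈ l, AC D x) :
    D * l.prod = (-1) ^ l.length * (l.prod * D) := by
  induction l with
  | nil => simp
  | cons x l ih =>
    have h1 : D * x = -(x * D) := h x (by simp)
    have h2 := ih (fun y hy => h y (by simp [hy]))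
    rw [List.prod_cons, ← mul_assoc, h1, neg_mul, mul_assoc, h2, List.length_cons, pow_succ]
    rcases neg_one_pow_eq_or R l.length with e | e <;> rw [e] <;> noncomm_ring

theorem mem_mul_prod (l : List R) (h : l.Pairwise AC) (x : R) (hx : x ∈ l) :
    x * l.prod = (-1) ^ (l.length + 1) * (l.prod * x) := by
  induction l with
  | nil => simp at hx
  | cons y l ih =>
    rw [List.pairwise_cons] at h
    rw [List.prod_cons, List.length_cons, pow_succ, pow_succ]
    rcases List.mem_cons.1 hx with rfl | hx
    · have := mul_prod x l h.1
      rw [this]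
      rcases neg_one_pow_eq_or R l.length with e | e <;> rw [e] <;> noncomm_ring
      all_goals rw [← mul_assoc, ← mul_assoc]; simp [this, e, mul_assoc]
    · have h1 : x * y = -(y * x) := (h.1 x hx).symm
      have h2 := ih h.2 hx
      rw [pow_succ] at h2
      rw [← mul_assoc, h1, neg_mul, mul_assoc, h2]
      rcases neg_one_pow_eq_or R l.length with e | e <;> rw [e] <;> noncomm_ring

theorem prod_sq_cons (x : R) (l : List R) (h : ∀ y ∈ l, AC x y) :
    (x :: l).prod * (x :: l).prod = (-1) ^ l.length * (x * x * (l.prod * l.prod)) := by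
  have h1 := mul_prod x l h
  rw [List.prod_cons]
  have : x * (l.prod * x) * l.prod = x * ((-1) ^ l.length * (x * l.prod)) * l.prod := by
    rw [h1, ← mul_assoc ((-1) ^ _), ← pow_add, Even.neg_one_pow ⟨_, rfl⟩, one_mul]
  rw [← mul_assoc, mul_assoc x, this]
  rcases neg_one_pow_eq_or R l.length with e | e <;> rw [e] <;> noncomm_ring

theorem prod_sq_B (B : List R) (hB : ∀ b ∈ B, b * b = -1) (h : B.Pairwise AC) :
    B.prod * B.prod = (-1) ^ (B.length.choose 2 + B.length) := by
  induction B with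
  | nil => simp
  | cons x l ih =>
    rw [List.pairwise_cons] at h
    rw [prod_sq_cons x l h.1, hB x (by simp), ih (fun b hb => hB b (by simp [hb])) h.2,
      List.length_cons, Nat.choose_succ_succ' _ 1, Nat.choose_one_right]
    simp only [pow_add, pow_one]
    rcases neg_one_pow_eq_or R l.length with e | e <;> rw [e] <;> noncomm_ring

theorem prod_sq (A B : List R) (h : Sys A B) :
    (A ++ B).prod * (A ++ B).prod = (-1) ^ ((A.length + B.length).choose 2 + B.length) := by
  obtain ⟨hA, hB, h⟩ := h
  induction A with
  | nil => simpa using prod_sq_B B hB h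
  | cons x l ih =>
    rw [List.cons_append, List.pairwise_cons] at h
    rw [List.cons_append, prod_sq_cons x _ h.1, hA x (by simp), ih (fun b hb => hA b (by simp [hb])) h.2,
      List.length_cons, add_right_comm, Nat.choose_succ_succ' _ 1, Nat.choose_one_right,
      List.length_append]
    simp only [pow_add, one_mul, mul_assoc]

end lists

end PinorD

open PinorD in

open CliffordAlgebra in
/-- In signature `p − q ≡ 3, 7 (mod 8)` (`α = −1` resp. `+1`), for an elementary real pinor
representation `γ₀` of `Cl_{p,q}` with `J = γ₀(ω)` the image of the Clifford volume
element, there exists an invertible `D` anticommuting with all `γ₀(ι(v))` and with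
`D² = α·id`; every such `D` anticommutes with `J`, and any `D'` satisfying the same two
conditions equals `(a·id + b·J)∘D` with `a² + b² = 1`. -/
theorem exists_conjugation_D (p q : ℕ) (α : ℝ)
    (hα : (((p : ℤ) - (q : ℤ)) ≡ 3 [ZMOD 8] ∧ α = -1) ∨
      (((p : ℤ) - (q : ℤ)) ≡ 7 [ZMOD 8] ∧ α = 1))
    (Q : QuadraticForm ℝ (Fin (p + q) → ℝ))
    (hQ : ∀ x : Fin (p + q) → ℝ,
      Q x = ∑ i : Fin (p + q), (if (i : ℕ) < p then (1 : ℝ) else -1) * x i ^ 2)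
    {S₀ : Type*} [AddCommGroup S₀] [Module ℝ S₀] [Nontrivial S₀] [FiniteDimensional ℝ S₀]
    (γ₀ : CliffordAlgebra Q →ₐ[ℝ] Module.End ℝ S₀)
    (hsimple : ∀ W : Submodule ℝ S₀,
      (∀ x : CliffordAlgebra Q, ∀ w ∈ W, γ₀ x w ∈ W) → W = ⊥ ∨ W = ⊤)
    (J : Module.End ℝ S₀)
    (hJ : J = γ₀ ((List.ofFn fun i : Fin (p + q) =>
      CliffordAlgebra.ι Q (Pi.single i 1)).prod))
 :
    (∃ D : Module.End ℝ S₀, IsUnit D ∧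
      (∀ v : Fin (p + q) → ℝ, D * γ₀ (ι Q v) = -(γ₀ (ι Q v) * D)) ∧
      D * D = α • (1 : Module.End ℝ S₀)) ∧
    (∀ D : Module.End ℝ S₀, IsUnit D →
      (∀ v : Fin (p + q) → ℝ, D * γ₀ (ι Q v) = -(γ₀ (ι Q v) * D)) →
      D * D = α • (1 : Module.End ℝ S₀) → D * J = -(J * D)) ∧
    (∀ D D' : Module.End ℝ S₀, IsUnit D →
      (∀ v : Fin (p + q) → ℝ, D * γ₀ (ι Q v) = -(γ₀ (ι Q v) * D)) →
      D * D = α • (1 : Module.End ℝ S₀) →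
      (∀ v : Fin (p + q) → ℝ, D' * γ₀ (ι Q v) = -(γ₀ (ι Q v) * D')) →
      D' * D' = α • (1 : Module.End ℝ S₀) →
      ∃ a b : ℝ, a ^ 2 + b ^ 2 = 1 ∧ D' = (a • (1 : Module.End ℝ S₀) + b • J) * D) := by
  have hαα : α * α = 1 := by rcases hα with ⟨-, rfl⟩ | ⟨-, rfl⟩ <;> norm_num
  have hα0 : α ≠ 0 := by rintro rfl; norm_num at hαα
  let g : Fin (p + q) → Module.End ℝ S₀ := fun i => γ₀ (ι Q (Pi.single i 1))
  have hQ1 : ∀ i, Q (Pi.single i 1) = if (i : ℕ) < p then (1 : ℝ) else -1 := by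
    intro i
    rw [hQ, Finset.sum_eq_single i]
    · simp
    · intro j _ hj
      simp [hj]
    · simp
  have hg1 : ∀ i, g i * g i = algebraMap ℝ _ (if (i : ℕ) < p then (1 : ℝ) else -1) := by
    intro i
    simp only [g]
    rw [← map_mul, ι_sq_scalar, hQ1]
    exact γ₀.commutes _
  have hg2 : ∀ i j, i ≠ j → AC (g i) (g j) := by
    intro i j hij
    have ho : Q.IsOrtho (Pi.single i 1) (Pi.single j 1) := by
      rw [QuadraticMap.isOrtho_def, hQ, hQ, hQ, ← Finset.sum_add_distrib]
      refine Finset.sum_congr rfl fun k _ => ?_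
      have : (Pi.single i 1 : Fin (p + q) → ℝ) k * (Pi.single j 1 : Fin (p + q) → ℝ) k = 0 := by
        by_cases h : k = i
        · subst h; simp [hij]
        · simp [h]
      rw [Pi.add_apply]
      linear_combination (2 * (if (k : ℕ) < p then (1 : ℝ) else -1)) * this
    have := congrArg γ₀ (ι_mul_ι_add_swap_of_isOrtho ho)
    rw [map_add, map_mul, map_mul, map_zero] at this
    exact eq_neg_of_add_eq_zero_left this
  let A := List.ofFn fun i : Fin p => g (Fin.castAdd q i)
  let B := List.ofFn fun i : Fin q => g (Fin.natAdd p i)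
  have hABg : A ++ B = List.ofFn g := by
    rw [List.ofFn_add]; rfl
  have hSys : Sys A B := by
    refine ⟨?_, ?_, ?_⟩
    · intro a ha
      obtain ⟨i, rfl⟩ := (List.mem_ofFn' _ _).1 ha
      rw [hg1]; simp
    · intro a ha
      obtain ⟨i, rfl⟩ := (List.mem_ofFn' _ _).1 ha
      rw [hg1]; simp
    · rw [hABg, List.pairwise_ofFn]
      exact fun i j hij => hg2 i j hij.ne
  have hJl : J = (A ++ B).prod := by
    rw [hABg, hJ, map_list_prod, List.map_ofFn]; rfl
  have hodd : Odd (p + q) := by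
    unfold Int.ModEq at hα
    rw [Nat.odd_iff]; omega
  have hlen : (A ++ B).length = p + q := by simp [A, B]
  have hJJ : J * J = -1 := by
    rw [hJl, prod_sq A B hSys]
    have : A.length = p := by simp [A]
    rw [this]
    have : B.length = q := by simp [B]
    rw [this]
    apply Odd.neg_one_pow
    unfold Int.ModEq at hα
    obtain ⟨m, hm⟩ := hodd
    have hc : (p + q).choose 2 = (2 * m + 1) * m := by
      rw [hm, Nat.choose_two_right, Nat.add_sub_cancel, mul_left_comm, Nat.mul_div_cancel_left _ (by norm_num)]
    rw [hc]
    have : (2 * m + 1) * m + q = 2 * (m * m) + (m + q) := by ring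
    rw [this, Nat.odd_iff]
    omega
  have ext1 : ∀ D : Module.End ℝ S₀, (∀ i, AC D (g i)) → ∀ v : Fin (p + q) → ℝ,
      D * γ₀ (ι Q v) = -(γ₀ (ι Q v) * D) := by
    intro D h v
    rw [pi_eq_sum_univ' v]
    simp only [map_sum, map_smul, Finset.mul_sum, Finset.sum_mul, mul_smul_comm, smul_mul_assoc,
      ← Finset.sum_neg_distrib, ← smul_neg]
    exact Finset.sum_congr rfl fun i _ => congrArg _ (h i)
  have ext2 : ∀ X : Module.End ℝ S₀, (∀ i, X * g i = g i * X) → ∀ x : CliffordAlgebra Q,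
      X * γ₀ x = γ₀ x * X := by
    intro X h x
    induction x using CliffordAlgebra.induction with
    | algebraMap r => rw [γ₀.commutes]; exact (Algebra.commutes r X).symm
    | ι v =>
      rw [pi_eq_sum_univ' v]
      simp only [map_sum, map_smul, Finset.mul_sum, Finset.sum_mul, mul_smul_comm, smul_mul_assoc]
      exact Finset.sum_congr rfl fun i _ => congrArg _ (h i)
    | mul a b ha hb => rw [map_mul, ← mul_assoc, ha, mul_assoc, hb, mul_assoc]
    | add a b ha hb => rw [map_add, mul_add, add_mul, ha, hb]
  have hJg : ∀ i, J * g i = g i * J := by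
    intro i
    have := mem_mul_prod (A ++ B) hSys.2.2 (g i) (by rw [hABg]; exact (List.mem_ofFn' _ _).2 ⟨i, rfl⟩)
    rw [hlen, Even.neg_one_pow hodd.add_one, one_mul, ← hJl] at this
    exact this.symm
  have part2 : ∀ D : Module.End ℝ S₀, 
      (∀ v : Fin (p + q) → ℝ, D * γ₀ (ι Q v) = -(γ₀ (ι Q v) * D)) → D * J = -(J * D) := by
    intro D h
    have := mul_prod D (A ++ B) (by
      intro x hx
      rw [hABg] at hx
      obtain ⟨i, rfl⟩ := (List.mem_ofFn' _ _).1 hx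
      exact h _)
    rw [hlen, hodd.neg_one_pow, ← hJl] at this
    rw [this, neg_one_mul]
  refine ⟨?_, fun D _ h _ => part2 D h, ?_⟩
  · obtain ⟨D, hD1, hD2⟩ := Pall p q α hα S₀ A B hSys (by simp [A]) (by simp [B])
    refine ⟨D, ?_, ext1 D ?_, hD1⟩
    · refine IsUnit.of_mul_eq_one (α • D) ?_
      rw [mul_smul_comm, hD1, smul_smul, hαα, one_smul]
    · intro i
      apply hD2
      rw [hABg]; exact (List.mem_ofFn' _ _).2 ⟨i, rfl⟩
  · intro D D' _ hD hDD hD' hDD'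
    have hDJ := part2 D hD
    have hXg : ∀ i, (D' * D) * g i = g i * (D' * D) := by
      intro i
      have e1 : D * g i = -(g i * D) := hD _
      have e2 : D' * g i = -(g i * D') := hD' _
      rw [mul_assoc, e1, mul_neg, ← mul_assoc, e2, neg_mul, neg_neg, mul_assoc]
    have hXJ : (D' * D) * J = J * (D' * D) := by
      rw [hJ]; exact ext2 _ hXg _
    obtain ⟨a, b, v, hv, hXv⟩ := (cplx J hJJ).2 inferInstance inferInstance (D' * D) hXJ
    have hY := ext2 (D' * D - (a • 1 + b • J)) (by
      intro i
      rw [sub_mul, mul_sub, hXg, add_mul, mul_add, smul_mul_assoc, smul_mul_assoc, mul_smul_comm,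
        mul_smul_comm, hJg, one_mul, mul_one])
    have hker : LinearMap.ker (D' * D - (a • 1 + b • J)) = ⊤ := by
      refine (hsimple _ ?_).resolve_left ?_
      · intro x w hw
        rw [LinearMap.mem_ker] at hw ⊢
        have := LinearMap.congr_fun (hY x) w
        rw [Module.End.mul_apply, Module.End.mul_apply, hw, map_zero] at this
        exact this
      · intro h0
        apply hv
        rw [← Submodule.mem_bot ℝ, ← h0, LinearMap.mem_ker, LinearMap.sub_apply, hXv]
        simp
    have hX : D' * D = a • 1 + b • J := sub_eq_zero.1 (LinearMap.ker_eq_top.1 hker)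
    have hD'e : D' = ((α * a) • (1 : Module.End ℝ S₀) + (α * b) • J) * D := by
      have : D' * D * D = (a • 1 + b • J) * D := by rw [hX]
      rw [mul_assoc, hDD, mul_smul_comm, mul_one] at this
      rw [mul_smul, mul_smul, ← smul_add, smul_mul_assoc, ← this, smul_smul, hαα, one_smul]
    refine ⟨α * a, α * b, ?_, hD'e⟩
    generalize α * a = a' at *
    generalize α * b = b' at *
    have : D' * D' = ((a' ^ 2 + b' ^ 2) * α) • (1 : Module.End ℝ S₀) := by
      rw [hD'e]
      have : (a' • (1 : Module.End ℝ S₀) + b' • J) * D * ((a' • (1 : Module.End ℝ S₀) + b' • J) * D)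
          = (a' • (1 : Module.End ℝ S₀) + b' • J) * ((a' • (1 : Module.End ℝ S₀) - b' • J) * (D * D)) := by
        rw [mul_assoc, ← mul_assoc D, mul_add, mul_smul_comm, mul_smul_comm, hDJ, ← mul_assoc _ D D]
        congr 2
        rw [sub_mul, smul_mul_assoc, smul_mul_assoc, one_mul, mul_one, smul_neg, sub_eq_add_neg]
      rw [this, hDD, mul_smul_comm, mul_one, mul_smul_comm, mul_sub, add_mul, add_mul]
      simp only [smul_mul_assoc, mul_smul_comm, hJJ, one_mul, mul_one]
      module
    rw [hDD'] at this
    have h3 : α = (a' ^ 2 + b' ^ 2) * α := smul_left_injective ℝ (one_ne_zero (α := Module.End ℝ S₀)) this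
    exact mul_right_cancel₀ hα0 (by rw [one_mul]; exact h3.symm)
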